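/- Let D be a *-SH domain and let I be a *-invertible integral *-ideal of D. Then I is expressible, uniquely up to order, as a *-product of mutually *-comaximal *-homogeneous ideals. -/

import Mathlib

open scoped nonZeroDivisors

/-- A star operation on the nonzero fractional ideals of an integral domain `D`
with quotient field `K`: it fixes nonzero principal fractional ideals, commutes with
multiplication by nonzero principal fractional ideals, is extensive, monotone and
idempotent (on nonzero fractional ideals). -/
structure StarOperation (D K : Type*) [CommRing D] [IsDomain D] [Field K]
    [Algebra D K] [IsFractionRing D K] where
  star : FractionalIdeal D⁰ K → FractionalIdeal D⁰ K
  star_spanSingleton : ∀ x : K, x ≠ 0 →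
    star (FractionalIdeal.spanSingleton D⁰ x) = FractionalIdeal.spanSingleton D⁰ x
  star_smul : ∀ (x : K) (I : FractionalIdeal D⁰ K), x ≠ 0 → I ≠ 0 →
    star (FractionalIdeal.spanSingleton D⁰ x * I) = FractionalIdeal.spanSingleton D⁰ x * star I
  le_star : ∀ I : FractionalIdeal D⁰ K, I ≠ 0 → I ≤ star I
  star_mono : ∀ I J : FractionalIdeal D⁰ K, I ≠ 0 → J ≠ 0 → I ≤ J → star I ≤ star J
  star_idem : ∀ I : FractionalIdeal D⁰ K, I ≠ 0 → star (star I) = star I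

namespace StarOperation

variable {D K : Type*} [CommRing D] [IsDomain D] [Field K] [Algebra D K] [IsFractionRing D K]
variable (s : StarOperation D K)

/-- `*` has finite character: for every nonzero fractional ideal `I`, `I^*` is the union
of `J^*` over the nonzero finitely generated fractional subideals `J` of `I`. -/
def FiniteCharacter : Prop :=
  ∀ I : FractionalIdeal D⁰ K, I ≠ 0 → ∀ x ∈ s.star I,
    ∃ J : FractionalIdeal D⁰ K, J ≠ 0 ∧ (J : Submodule D K).FG ∧ J ≤ I ∧ x ∈ s.star J

/-- A (nonzero) integral ideal `I` of `D` is a `*`-ideal if `I^* = I`. -/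
def IsStarIdeal (I : Ideal D) : Prop :=
  I ≠ ⊥ ∧ s.star (I : FractionalIdeal D⁰ K) = (I : FractionalIdeal D⁰ K)

/-- An integral ideal `I` of `D` is a `*`-ideal of finite type if `I = J^*` for some
nonzero finitely generated ideal `J`. -/
def IsFiniteTypeStarIdeal (I : Ideal D) : Prop :=
  ∃ J : Ideal D, J ≠ ⊥ ∧ J.FG ∧
    s.star (J : FractionalIdeal D⁰ K) = (I : FractionalIdeal D⁰ K)

/-- A maximal `*`-ideal: maximal among proper integral `*`-ideals. -/
def IsMaxStarIdeal (M : Ideal D) : Prop :=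
  M ≠ ⊤ ∧ s.IsStarIdeal M ∧ ∀ J : Ideal D, J ≠ ⊤ → s.IsStarIdeal J → M ≤ J → J = M

/-- `I` is `*`-homogeneous: a proper `*`-ideal of finite type such that `(J + J')^* ≠ D`
for every pair `J`, `J'` of proper `*`-ideals of finite type containing `I`. -/
def IsHomog (I : Ideal D) : Prop :=
  I ≠ ⊤ ∧ s.IsStarIdeal I ∧ s.IsFiniteTypeStarIdeal I ∧
    ∀ J J' : Ideal D, J ≠ ⊤ → J' ≠ ⊤ → s.IsStarIdeal J → s.IsStarIdeal J' →
      s.IsFiniteTypeStarIdeal J → s.IsFiniteTypeStarIdeal J' → I ≤ J → I ≤ J' →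
      s.star ((J + J' : Ideal D) : FractionalIdeal D⁰ K) ≠ 1

/-- The set `M(I) = {x ∈ D : (xD + I)^* ≠ D}` attached to an ideal `I`. -/
def MSet (I : Ideal D) : Set D :=
  {x : D | s.star ((Ideal.span {x} + I : Ideal D) : FractionalIdeal D⁰ K) ≠ 1}

/-- `A` and `B` are `*`-comaximal if `(A + B)^* = D`. -/
def StarComaximal (A B : Ideal D) : Prop :=
  s.star ((A + B : Ideal D) : FractionalIdeal D⁰ K) = 1

/-- An integral ideal `I` is `*`-invertible if `(I · I⁻¹)^* = D`. -/
def StarInvertible (I : Ideal D) : Prop :=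
  s.star ((I : FractionalIdeal D⁰ K) * (I : FractionalIdeal D⁰ K)⁻¹) = 1

/-- `D` is a `*`-SH domain: every principal ideal generated by a nonzero nonunit is a
`*`-product of finitely many `*`-homogeneous ideals. -/
def IsSHDomain : Prop :=
  ∀ x : D, x ≠ 0 → ¬IsUnit x →
    ∃ T : Multiset (Ideal D), (∀ J ∈ T, s.IsHomog J) ∧
      s.star ((T.prod : Ideal D) : FractionalIdeal D⁰ K) =
        ((Ideal.span {x} : Ideal D) : FractionalIdeal D⁰ K)

/-- `D` has finite `*`-character: every nonzero nonunit lies in only finitely many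
maximal `*`-ideals. -/
def FiniteStarCharacter : Prop :=
  ∀ x : D, x ≠ 0 → ¬IsUnit x → {P : Ideal D | s.IsMaxStarIdeal P ∧ x ∈ P}.Finite

end StarOperation

/-!
Call an ordered commutative semiring integral when `1` is its largest element. In an integral
idempotent semiring `a` and `b` are coprime exactly when `a + b = 1`. An element `x ≠ 1` is
homogeneous when no two elements of `{y | x ≤ y, y ≠ 1}` are coprime, which makes
non-coprimality transitive through `x`: if `a` and `b` are both non-coprime to `x`, then `a + x` and
`b + x` lie in this set, so `a` and `b` are not coprime either.

Hence the product of two non-coprime homogeneous elements is homogeneous, and every product of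
homogeneous elements can be regrouped into pairwise coprime ones. If such a product `∏ xᵢ` is below
`a`, then distributivity gives `a = a + ∏ xᵢ = ∏ (a + xᵢ)`, and each `a + xᵢ` is `1` or homogeneous.
The factors are unique because each of them is non-coprime to exactly one factor of any other such
factorization, and coprimality to all the other factors forces the two to be equal.

The `*`-ideals of finite type form an integral idempotent semiring under `(I + J)^*` and `(IJ)^*`,
in which homogeneous and coprime mean `*`-homogeneous and `*`-comaximal; a `*`-invertible
`*`-ideal is of finite type because `*` has finite character.
-/

theorem multiset_pairwise_cons {α : Type*} {r : α → α → Prop} [Std.Symm r] {a : α}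
    {m : Multiset α} : (a ::ₘ m).Pairwise r ↔ (∀ b ∈ m, r a b) ∧ m.Pairwise r := by
  induction m using Quotient.inductionOn with
  | h l => simp [Multiset.pairwise_coe_iff_pairwise]

theorem isCoprime_multiset_prod_right {R : Type*} [CommSemiring R] {a : R} {T : Multiset R}
    (h : ∀ b ∈ T, IsCoprime a b) : IsCoprime a T.prod :=
  Multiset.prod_induction (IsCoprime a) T (fun _ _ => IsCoprime.mul_right) isCoprime_one_right h

/-- An integral order on a set with `1`: the unit is the greatest element, as it is for the ideals
of a ring. -/
class IsIntegralOrder (Q : Type*) [One Q] [LE Q] : Prop where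
  le_one (a : Q) : a ≤ 1

namespace IsIntegralOrder

variable {Q : Type*} [IdemCommSemiring Q] {a b c x y : Q} {T U : Multiset Q}

/-- Homogeneous elements: `x ≠ 1`, and two coprime elements above `x` never both differ from `1`.
This is `*`-homogeneity, read in the semiring of `*`-ideals of finite type. -/
def IsHomogeneous (x : Q) : Prop :=
  x ≠ 1 ∧ ∀ y z : Q, x ≤ y → x ≤ z → IsCoprime y z → y = 1 ∨ z = 1

theorem IsHomogeneous.of_le (hx : IsHomogeneous x) (hxy : x ≤ y) (hy : y ≠ 1) : IsHomogeneous y :=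
  ⟨hy, fun u v hu hv => hx.2 u v (hxy.trans hu) (hxy.trans hv)⟩

/-- `T` is a factorization of `a` into pairwise coprime homogeneous elements; a multiset records
the factors up to order. -/
structure IsHomogeneousFactorization (T : Multiset Q) (a : Q) : Prop where
  isHomogeneous : ∀ x ∈ T, IsHomogeneous x
  pairwise : T.Pairwise IsCoprime
  prod_eq : T.prod = a

theorem IsHomogeneousFactorization.cons_iff : IsHomogeneousFactorization (x ::ₘ T) a ↔
    IsHomogeneous x ∧ (∀ y ∈ T, IsCoprime x y) ∧ IsHomogeneousFactorization T T.prod ∧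
      x * T.prod = a := by
  constructor
  · rintro ⟨hom, pw, rfl⟩
    obtain ⟨hx, hT⟩ := Multiset.forall_mem_cons.1 hom
    obtain ⟨hxT, pw⟩ := multiset_pairwise_cons.1 pw
    exact ⟨hx, hxT, ⟨hT, pw, rfl⟩, (Multiset.prod_cons x T).symm⟩
  · rintro ⟨hx, hxT, ⟨hT, pw, -⟩, rfl⟩
    exact ⟨Multiset.forall_mem_cons.2 ⟨hx, hT⟩, multiset_pairwise_cons.2 ⟨hxT, pw⟩,
      Multiset.prod_cons x T⟩

variable [IsIntegralOrder Q]

theorem le_of_dvd (h : a ∣ b) : b ≤ a := by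
  obtain ⟨c, rfl⟩ := h
  exact mul_le_of_le_one_right' (le_one c)

theorem eq_one_of_one_le (h : 1 ≤ a) : a = 1 :=
  (le_one a).antisymm h

theorem isCoprime_iff_add_eq_one : IsCoprime a b ↔ a + b = 1 := by
  refine ⟨fun ⟨u, v, h⟩ => eq_one_of_one_le ?_, fun h => ⟨1, 1, by rwa [one_mul, one_mul]⟩⟩
  rw [← h]
  exact add_le_add (le_of_dvd (dvd_mul_left a u)) (le_of_dvd (dvd_mul_left b v))

theorem isCoprime_self_iff_eq_one : IsCoprime a a ↔ a = 1 := by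
  rw [isCoprime_iff_add_eq_one, add_idem]

theorem isCoprime_mono (h : IsCoprime a b) (ha : a ≤ x) (hb : b ≤ y) : IsCoprime x y := by
  rw [isCoprime_iff_add_eq_one] at h ⊢
  exact eq_one_of_one_le (h ▸ add_le_add ha hb)

theorem le_of_mul_le_of_isCoprime (h : IsCoprime b c) (hac : a * c ≤ b) : a ≤ b :=
  calc
    a = a * b + a * c := by rw [← mul_add, isCoprime_iff_add_eq_one.1 h, mul_one]
    _ ≤ b := add_le (le_of_dvd (dvd_mul_left b a)) hac

theorem add_mul_eq_of_isCoprime (h : IsCoprime b c) : a + b * c = (a + b) * (a + c) := by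
  apply le_antisymm
  · have ha : a ≤ (a + b) * (a + c) :=
      calc
        a = b * a + a * c := by
          rw [mul_comm b, ← mul_add, isCoprime_iff_add_eq_one.1 h, mul_one]
        _ ≤ (a + b) * (a + c) :=
          add_le (mul_le_mul' le_add_self le_self_add) (mul_le_mul' le_self_add le_add_self)
    exact add_le ha (mul_le_mul' le_add_self le_add_self)
  · rw [add_mul, mul_add b]
    exact add_le ((le_of_dvd (dvd_mul_right a _)).trans le_self_add)
      (add_le_add (le_of_dvd (dvd_mul_left a b)) le_rfl)

theorem prod_map_add_of_pairwise_isCoprime (a : Q) (hT : T.Pairwise IsCoprime) :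
    (T.map (a + ·)).prod = a + T.prod := by
  induction T using Multiset.induction with
  | empty => simpa using (eq_one_of_one_le le_add_self).symm
  | cons x T ih =>
    obtain ⟨hx, hT⟩ := multiset_pairwise_cons.1 hT
    rw [Multiset.map_cons, Multiset.prod_cons, Multiset.prod_cons, ih hT,
      add_mul_eq_of_isCoprime (isCoprime_multiset_prod_right hx)]

theorem IsHomogeneous.not_isCoprime_trans (hx : IsHomogeneous x) (ha : ¬IsCoprime a x)
    (hb : ¬IsCoprime x b) : ¬IsCoprime a b := by
  rw [isCoprime_iff_add_eq_one] at ha hb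
  intro hab
  rcases hx.2 (a + x) (x + b) le_add_self le_self_add
    (isCoprime_mono hab le_self_add le_add_self) with h | h
  exacts [ha h, hb h]

theorem IsHomogeneous.mul (hx : IsHomogeneous x) (hy : IsHomogeneous y) (hxy : ¬IsCoprime x y) :
    IsHomogeneous (x * y) := by
  have not_isCoprime_of_le {u : Q} (hu : x * y ≤ u) (hu1 : u ≠ 1) : ¬IsCoprime x u := by
    intro hxu
    have hyu : IsCoprime y u := by
      by_contra hyu
      exact hy.not_isCoprime_trans hxy hyu hxu
    exact hu1 (isCoprime_self_iff_eq_one.1 (isCoprime_mono (hxu.mul_left hyu) hu le_rfl))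
  refine ⟨fun h => hx.1 (eq_one_of_one_le (h ▸ le_of_dvd (dvd_mul_right x y))), ?_⟩
  intro u v hu hv huv
  by_contra! huv1
  exact hx.not_isCoprime_trans (fun h => not_isCoprime_of_le hu huv1.1 h.symm)
    (not_isCoprime_of_le hv huv1.2) huv

namespace IsHomogeneousFactorization

theorem exists_mul (hx : IsHomogeneous x) (hT : IsHomogeneousFactorization T a) :
    ∃ U, IsHomogeneousFactorization U (x * a) := by
  obtain rfl := hT.prod_eq
  by_cases hxT : ∀ y ∈ T, IsCoprime x y
  · exact ⟨x ::ₘ T, cons_iff.2 ⟨hx, hxT, hT, rfl⟩⟩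
  push Not at hxT
  obtain ⟨y, hyT, hxy⟩ := hxT
  obtain ⟨T', rfl⟩ := Multiset.exists_cons_of_mem hyT
  obtain ⟨hy, hyT', hT', -⟩ := cons_iff.1 hT
  have hxyT' : ∀ z ∈ T', IsCoprime (x * y) z := by
    intro z hz
    have hxz : IsCoprime x z := by
      by_contra hxz
      exact hx.not_isCoprime_trans (fun h => hxy h.symm) hxz (hyT' z hz)
    exact hxz.mul_left (hyT' z hz)
  exact ⟨(x * y) ::ₘ T', cons_iff.2 ⟨hx.mul hy hxy, hxyT', hT', by
    rw [Multiset.prod_cons, mul_assoc]⟩⟩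

theorem exists_prod (hT : ∀ x ∈ T, IsHomogeneous x) :
    ∃ U, IsHomogeneousFactorization U T.prod := by
  induction T using Multiset.induction with
  | empty => exact ⟨0, by simp, Multiset.pairwise_zero _, rfl⟩
  | cons x T ih =>
    obtain ⟨hx, hT⟩ := Multiset.forall_mem_cons.1 hT
    obtain ⟨U, hU⟩ := ih hT
    simpa only [Multiset.prod_cons] using exists_mul hx hU

theorem exists_of_le (hT : IsHomogeneousFactorization T b) (hba : b ≤ a) :
    ∃ U, IsHomogeneousFactorization U a := by
  classical
  obtain ⟨hom, pw, rfl⟩ := hT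
  refine ⟨(T.map (a + ·)).filter (· ≠ 1), ?_, ?_, ?_⟩
  · intro y hy
    obtain ⟨hyT, hy1⟩ := Multiset.mem_filter.1 hy
    obtain ⟨x, hx, rfl⟩ := Multiset.mem_map.1 hyT
    exact (hom x hx).of_le le_add_self hy1
  · obtain ⟨l, rfl, hl⟩ := pw
    have hmap : (l.map (a + ·)).Pairwise IsCoprime :=
      hl.map _ fun _ _ h => isCoprime_mono h le_add_self le_add_self
    exact ⟨(l.map (a + ·)).filter (· ≠ 1), by simp, hmap.filter _⟩
  · have hones : ((T.map (a + ·)).filter (¬· ≠ 1)).prod = 1 :=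
      Multiset.prod_eq_one fun y hy => not_not.1 (Multiset.mem_filter.1 hy).2
    calc
      ((T.map (a + ·)).filter (· ≠ 1)).prod
      _ = ((T.map (a + ·)).filter (· ≠ 1)).prod * ((T.map (a + ·)).filter (¬· ≠ 1)).prod := by
        rw [hones, mul_one]
      _ = (T.map (a + ·)).prod := Multiset.prod_filter_mul_prod_filter_not (· ≠ 1)
      _ = a + T.prod := prod_map_add_of_pairwise_isCoprime a pw
      _ = a := hba.add_eq_left

theorem exists_not_isCoprime (hT : IsHomogeneousFactorization T a)
    (hU : IsHomogeneousFactorization U a) (hx : x ∈ T) : ∃ y ∈ U, ¬IsCoprime x y := by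
  by_contra! hxU
  have hax : a ≤ x := hT.prod_eq ▸ le_of_dvd (Multiset.dvd_prod hx)
  have hxa : IsCoprime x a := hU.prod_eq ▸ isCoprime_multiset_prod_right hxU
  exact (hT.isHomogeneous x hx).1 (isCoprime_self_iff_eq_one.1 (isCoprime_mono hxa le_rfl hax))

theorem le_of_not_isCoprime (hT : IsHomogeneousFactorization T a)
    (hU : IsHomogeneousFactorization U a) (hx : x ∈ T) (hy : y ∈ U) (hxy : ¬IsCoprime x y) :
    x ≤ y := by
  have hay : a ≤ y := hU.prod_eq ▸ le_of_dvd (Multiset.dvd_prod hy)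
  obtain ⟨T', rfl⟩ := Multiset.exists_cons_of_mem hx
  obtain ⟨-, hxT', -, rfl⟩ := cons_iff.1 hT
  have hyT' : IsCoprime y T'.prod := by
    refine isCoprime_multiset_prod_right fun z hz => ?_
    by_contra hyz
    exact (hU.isHomogeneous y hy).not_isCoprime_trans hxy hyz (hxT' z hz)
  exact le_of_mul_le_of_isCoprime hyT' hay

theorem subset (hT : IsHomogeneousFactorization T a) (hU : IsHomogeneousFactorization U a) :
    T ⊆ U := by
  intro x hx
  obtain ⟨y, hy, hxy⟩ := hT.exists_not_isCoprime hU hx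
  have hxy' : x = y := (hT.le_of_not_isCoprime hU hx hy hxy).antisymm
    (hU.le_of_not_isCoprime hT hy hx fun h => hxy h.symm)
  rwa [hxy']

theorem nodup (hT : IsHomogeneousFactorization T a) : T.Nodup := by
  obtain ⟨hom, ⟨l, rfl, hl⟩, -⟩ := hT
  refine hl.imp_of_mem ?_
  rintro x _ hx - hxx rfl
  exact (hom x hx).1 (isCoprime_self_iff_eq_one.1 hxx)

theorem unique (hT : IsHomogeneousFactorization T a) (hU : IsHomogeneousFactorization U a) :
    T = U :=
  (hT.nodup.ext hU.nodup).2 fun _ => ⟨fun h => hT.subset hU h, fun h => hU.subset hT h⟩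

theorem existsUnique_of_prod_le (hT : ∀ x ∈ T, IsHomogeneous x) (hTa : T.prod ≤ a) :
    ∃! U, IsHomogeneousFactorization U a := by
  obtain ⟨V, hV⟩ := exists_prod hT
  obtain ⟨U, hU⟩ := hV.exists_of_le hTa
  exact ⟨U, hU, fun _ hW => hW.unique hU⟩

end IsHomogeneousFactorization

end IsIntegralOrder

/-- A semiprime closure operation on the ideals of `R`: a closure operator `c` with
`I * c J ≤ c (I * J)`. Star operations on a domain restrict to such closures of its ideals. -/
structure SemiprimeClosure (R : Type*) [CommSemiring R] extends ClosureOperator (Ideal R) where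
  mul_closure_le' : ∀ I J, I * toFun J ≤ toFun (I * J)

namespace SemiprimeClosure

variable {R : Type*} [CommSemiring R] (c : SemiprimeClosure R)

instance : CoeFun (SemiprimeClosure R) fun _ => Ideal R → Ideal R := ⟨fun c => c.toClosureOperator⟩

theorem mul_closure_le (I J : Ideal R) : I * c J ≤ c (I * J) := c.mul_closure_le' I J

theorem closure_mul_closure_right (I J : Ideal R) : c (I * c J) = c (I * J) :=
  (ClosureOperator.le_closure_iff.1 (c.mul_closure_le I J)).antisymm
    (c.monotone (Ideal.mul_mono_right (c.le_closure J)))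

theorem closure_mul_closure_left (I J : Ideal R) : c (c I * J) = c (I * J) := by
  rw [mul_comm, closure_mul_closure_right, mul_comm]

theorem closure_mul_closure (I J : Ideal R) : c (c I * c J) = c (I * J) := by
  rw [closure_mul_closure_left, closure_mul_closure_right]

/-- Closed ideals of finite type: closures of finitely generated ideals. -/
def IsFiniteType (I : Ideal R) : Prop := ∃ J : Ideal R, J.FG ∧ c J = I

/-- The closed ideals of finite type, which form an integral idempotent semiring under the closures
of sums and products. -/
@[ext]
structure FiniteTypeIdeal where
  toIdeal : Ideal R
  isFiniteType : c.IsFiniteType toIdeal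

namespace FiniteTypeIdeal

variable {c}

instance : CoeOut c.FiniteTypeIdeal (Ideal R) := ⟨toIdeal⟩

instance : CanLift (Ideal R) c.FiniteTypeIdeal (↑) c.IsFiniteType :=
  ⟨fun I hI => ⟨⟨I, hI⟩, rfl⟩⟩

theorem closure_coe (x : c.FiniteTypeIdeal) : c x = x := by
  obtain ⟨_, J, -, rfl⟩ := x
  exact c.idempotent J

instance : PartialOrder c.FiniteTypeIdeal := .lift toIdeal fun _ _ => FiniteTypeIdeal.ext

instance : Zero c.FiniteTypeIdeal := ⟨c ⊥, ⊥, Submodule.fg_bot, rfl⟩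

instance : One c.FiniteTypeIdeal := ⟨⊤, ⊤, Ideal.fg_top R, c.closure_top⟩

instance : Add c.FiniteTypeIdeal where
  add x y := ⟨c (x ⊔ y), by
    obtain ⟨⟨_, I, hI, rfl⟩, ⟨_, J, hJ, rfl⟩⟩ := x, y
    exact ⟨I ⊔ J, Submodule.FG.sup hI hJ, (c.closure_sup_closure I J).symm⟩⟩

instance : Mul c.FiniteTypeIdeal where
  mul x y := ⟨c (x * y), by
    obtain ⟨⟨_, I, hI, rfl⟩, ⟨_, J, hJ, rfl⟩⟩ := x, y
    exact ⟨I * J, Submodule.FG.mul hI hJ, (c.closure_mul_closure I J).symm⟩⟩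

theorem coe_zero : ((0 : c.FiniteTypeIdeal) : Ideal R) = c ⊥ := rfl

theorem coe_one : ((1 : c.FiniteTypeIdeal) : Ideal R) = ⊤ := rfl

theorem coe_ne_top_iff {x : c.FiniteTypeIdeal} : (x : Ideal R) ≠ ⊤ ↔ x ≠ 1 := by
  rw [ne_eq, ne_eq, FiniteTypeIdeal.ext_iff, coe_one]

theorem coe_add (x y : c.FiniteTypeIdeal) : ((x + y : c.FiniteTypeIdeal) : Ideal R) = c (x ⊔ y) :=
  rfl

theorem coe_mul (x y : c.FiniteTypeIdeal) : ((x * y : c.FiniteTypeIdeal) : Ideal R) = c (x * y) :=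
  rfl

theorem le_iff_coe_le {x y : c.FiniteTypeIdeal} : x ≤ y ↔ (x : Ideal R) ≤ y := Iff.rfl

theorem closure_le_coe_iff {I : Ideal R} {x : c.FiniteTypeIdeal} : c I ≤ x ↔ I ≤ x := by
  rw [← closure_coe x, ← ClosureOperator.le_closure_iff]

instance : IdemCommSemiring c.FiniteTypeIdeal where
  add_assoc x y z := by
    ext1
    simp only [coe_add, c.closure_sup_closure_left, c.closure_sup_closure_right, sup_assoc]
  zero_add x := by
    ext1
    rw [coe_add, coe_zero, c.closure_sup_closure_left, bot_sup_eq, closure_coe]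
  add_zero x := by
    ext1
    rw [coe_add, coe_zero, c.closure_sup_closure_right, sup_bot_eq, closure_coe]
  add_comm x y := by
    ext1
    rw [coe_add, coe_add, sup_comm]
  nsmul := nsmulRec
  left_distrib x y z := by
    ext1
    simp only [coe_add, coe_mul, c.closure_mul_closure_right, c.closure_sup_closure, Ideal.mul_sup]
  right_distrib x y z := by
    ext1
    simp only [coe_add, coe_mul, c.closure_mul_closure_left, c.closure_sup_closure, Ideal.sup_mul]
  zero_mul x := by
    ext1
    rw [coe_mul, coe_zero, closure_mul_closure_left, Ideal.bot_mul]
  mul_zero x := by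
    ext1
    rw [coe_mul, coe_zero, closure_mul_closure_right, Ideal.mul_bot]
  mul_assoc x y z := by
    ext1
    simp only [coe_mul, closure_mul_closure_left, closure_mul_closure_right, mul_assoc]
  one_mul x := by
    ext1
    rw [coe_mul, coe_one, Ideal.top_mul, closure_coe]
  mul_one x := by
    ext1
    rw [coe_mul, coe_one, Ideal.mul_top, closure_coe]
  mul_comm x y := by
    ext1
    rw [coe_mul, coe_mul, mul_comm]
  sup x y := x + y
  le_sup_left x y := le_sup_left.trans (c.le_closure _)
  le_sup_right x y := le_sup_right.trans (c.le_closure _)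
  sup_le x y z hxz hyz := closure_le_coe_iff.2 (sup_le hxz hyz)
  bot := 0
  bot_le x := closure_le_coe_iff.2 bot_le

instance : IsIntegralOrder c.FiniteTypeIdeal := ⟨fun _ => le_iff_coe_le.2 le_top⟩

theorem coe_prod (T : Multiset c.FiniteTypeIdeal) :
    ((T.prod : c.FiniteTypeIdeal) : Ideal R) = c (T.map (↑)).prod := by
  induction T using Multiset.induction with
  | empty => simp [coe_one, Ideal.one_eq_top]
  | cons x T ih =>
    rw [Multiset.prod_cons, Multiset.map_cons, Multiset.prod_cons, coe_mul, ih,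
      closure_mul_closure_right]

theorem isCoprime_iff {x y : c.FiniteTypeIdeal} :
    IsCoprime x y ↔ c ((x : Ideal R) ⊔ y) = ⊤ := by
  rw [IsIntegralOrder.isCoprime_iff_add_eq_one, FiniteTypeIdeal.ext_iff, coe_add, coe_one]

end FiniteTypeIdeal

end SemiprimeClosure

instance {R P : Type*} [CommRing R] [CommRing P] [Algebra R P] [NoZeroDivisors P]
    {S : Submonoid R} : NoZeroDivisors (FractionalIdeal S P) :=
  FractionalIdeal.coeToSubmodule_injective.noZeroDivisors _ FractionalIdeal.coe_zero
    FractionalIdeal.coe_mul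

theorem exists_fg_le_mul_of_fg_le_mul {R A : Type*} [CommSemiring R] [Semiring A] [Algebra R A]
    {N P Q : Submodule R A} (hN : N.FG) (h : N ≤ P * Q) :
    ∃ P' ≤ P, P'.FG ∧ N ≤ P' * Q := by
  induction N, hN using Submodule.fg_induction with
  | singleton x =>
    rw [Submodule.span_singleton_le_iff_mem] at h
    obtain ⟨S, S', hS, hS', hx⟩ := Submodule.mem_span_mul_finite_of_mem_mul h
    refine ⟨Submodule.span R S, Submodule.span_le.2 hS, ⟨S, rfl⟩, ?_⟩
    rw [Submodule.span_singleton_le_iff_mem]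
    rw [← Submodule.span_mul_span] at hx
    exact mul_le_mul' le_rfl (Submodule.span_le.2 hS') hx
  | sup N₁ N₂ _ _ ih₁ ih₂ =>
    obtain ⟨P₁, hP₁, fg₁, h₁⟩ := ih₁ (le_sup_left.trans h)
    obtain ⟨P₂, hP₂, fg₂, h₂⟩ := ih₂ (le_sup_right.trans h)
    exact ⟨P₁ ⊔ P₂, sup_le hP₁ hP₂, Submodule.FG.sup fg₁ fg₂, sup_le
      (h₁.trans (mul_le_mul' le_sup_left le_rfl))
      (h₂.trans (mul_le_mul' le_sup_right le_rfl))⟩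

namespace StarOperation

open FractionalIdeal SemiprimeClosure IsIntegralOrder

variable {D K : Type*} [CommRing D] [IsDomain D] [Field K] [Algebra D K] [IsFractionRing D K]
variable (s : StarOperation D K)

theorem star_one : s.star 1 = 1 := by
  simpa using s.star_spanSingleton 1 one_ne_zero

theorem mul_star_le (A : FractionalIdeal D⁰ K) {B : FractionalIdeal D⁰ K} (hB : B ≠ 0) :
    A * s.star B ≤ s.star (A * B) := by
  refine FractionalIdeal.mul_le.2 fun x hx y hy => ?_
  rcases eq_or_ne x 0 with rfl | hx0
  · simpa using FractionalIdeal.zero_mem _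
  have hxA : spanSingleton D⁰ x ≤ A := spanSingleton_le_iff_mem.2 hx
  have hxB : spanSingleton D⁰ x * B ≠ 0 := mul_ne_zero (spanSingleton_ne_zero_iff.2 hx0) hB
  have hAB : A * B ≠ 0 := mul_ne_zero (ne_bot_of_le_ne_bot (spanSingleton_ne_zero_iff.2 hx0) hxA) hB
  have hle : spanSingleton D⁰ x * s.star B ≤ s.star (A * B) := by
    rw [← s.star_smul x B hx0 hB]
    exact s.star_mono _ _ hxB hAB (mul_le_mul_left hxA B)
  exact hle (mul_mem_mul (mem_spanSingleton_self D⁰ x) hy)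

theorem exists_coeIdeal_eq_star {I : Ideal D} (hI : I ≠ ⊥) :
    ∃ J : Ideal D, (J : FractionalIdeal D⁰ K) = s.star (I : FractionalIdeal D⁰ K) := by
  rw [← le_one_iff_exists_coeIdeal, ← s.star_one]
  exact s.star_mono _ _ (coeIdeal_ne_zero.2 hI) one_ne_zero coeIdeal_le_one

open Classical in
/-- The map `I ↦ I^*` on integral ideals. The value of `s.star` at the zero ideal is unspecified, so
the zero ideal is made closed by hand. -/
noncomputable def idealStar (I : Ideal D) : Ideal D :=
  if hI : I = ⊥ then ⊥ else (s.exists_coeIdeal_eq_star hI).choose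

theorem idealStar_bot : s.idealStar ⊥ = ⊥ := dif_pos rfl

theorem coe_idealStar {I : Ideal D} (hI : I ≠ ⊥) :
    (s.idealStar I : FractionalIdeal D⁰ K) = s.star (I : FractionalIdeal D⁰ K) := by
  rw [idealStar, dif_neg hI]
  exact (s.exists_coeIdeal_eq_star hI).choose_spec

theorem le_idealStar (I : Ideal D) : I ≤ s.idealStar I := by
  rcases eq_or_ne I ⊥ with rfl | hI
  · exact bot_le
  · rw [← coeIdeal_le_coeIdeal K, s.coe_idealStar hI]
    exact s.le_star _ (coeIdeal_ne_zero.2 hI)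

theorem idealStar_le_of_le {I J : Ideal D} (h : I ≤ s.idealStar J) :
    s.idealStar I ≤ s.idealStar J := by
  rcases eq_or_ne I ⊥ with rfl | hI
  · exact s.idealStar_bot.trans_le bot_le
  have hJ : J ≠ ⊥ := by
    rintro rfl
    exact hI (le_bot_iff.1 (h.trans_eq s.idealStar_bot))
  have hsJ : s.idealStar J ≠ ⊥ := ne_bot_of_le_ne_bot hI h
  rw [← coeIdeal_le_coeIdeal K] at h ⊢
  calc
    (s.idealStar I : FractionalIdeal D⁰ K) = s.star I := s.coe_idealStar hI
    _ ≤ s.star (s.idealStar J) :=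
      s.star_mono _ _ (coeIdeal_ne_zero.2 hI) (coeIdeal_ne_zero.2 hsJ) h
    _ = s.idealStar J := by rw [s.coe_idealStar hJ, s.star_idem _ (coeIdeal_ne_zero.2 hJ)]

theorem mul_idealStar_le (I J : Ideal D) : I * s.idealStar J ≤ s.idealStar (I * J) := by
  rcases eq_or_ne I ⊥ with rfl | hI
  · simp
  rcases eq_or_ne J ⊥ with rfl | hJ
  · simp [idealStar_bot]
  rw [← coeIdeal_le_coeIdeal K, s.coe_idealStar (mul_ne_zero hI hJ), coeIdeal_mul, coeIdeal_mul,
    s.coe_idealStar hJ]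
  exact s.mul_star_le _ (coeIdeal_ne_zero.2 hJ)

/-- The semiprime closure operation on integral ideals induced by a star operation. -/
noncomputable def closure : SemiprimeClosure D where
  toClosureOperator := .mk₂ s.idealStar s.le_idealStar fun _ _ => s.idealStar_le_of_le
  mul_closure_le' := s.mul_idealStar_le

theorem closure_bot : s.closure ⊥ = ⊥ := s.idealStar_bot

theorem closure_eq_bot_iff {I : Ideal D} : s.closure I = ⊥ ↔ I = ⊥ :=
  ⟨fun h => le_bot_iff.1 (h ▸ s.closure.le_closure I), fun h => h ▸ s.closure_bot⟩

theorem star_coe_eq_coe_iff {I J : Ideal D} (hI : I ≠ ⊥) :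
    s.star (I : FractionalIdeal D⁰ K) = J ↔ s.closure I = J := by
  rw [← s.coe_idealStar hI]
  exact coeIdeal_inj

theorem star_coe_eq_one_iff {I : Ideal D} (hI : I ≠ ⊥) :
    s.star (I : FractionalIdeal D⁰ K) = 1 ↔ s.closure I = ⊤ := by
  rw [← s.star_coe_eq_coe_iff hI, coeIdeal_top]

theorem isFiniteTypeStarIdeal_iff {I : Ideal D} :
    s.IsFiniteTypeStarIdeal I ↔ I ≠ ⊥ ∧ s.closure.IsFiniteType I := by
  constructor
  · rintro ⟨J, hJ, fg, h⟩
    rw [s.star_coe_eq_coe_iff hJ] at h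
    exact ⟨h ▸ mt s.closure_eq_bot_iff.1 hJ, J, fg, h⟩
  · rintro ⟨hI, J, fg, rfl⟩
    have hJ : J ≠ ⊥ := mt s.closure_eq_bot_iff.2 hI
    exact ⟨J, hJ, fg, (s.star_coe_eq_coe_iff hJ).2 rfl⟩

variable {s}

theorem StarInvertible.exists_fg_le {I : Ideal D} (hinv : s.StarInvertible I)
    (hs : s.FiniteCharacter) (hI : I ≠ ⊥) :
    ∃ A ≤ I, A ≠ ⊥ ∧ A.FG ∧
      1 ≤ s.star ((A : FractionalIdeal D⁰ K) * (I : FractionalIdeal D⁰ K)⁻¹) := by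
  have hII : (I : FractionalIdeal D⁰ K) * (I : FractionalIdeal D⁰ K)⁻¹ ≠ 0 :=
    (bot_lt_mul_inv (coeIdeal_ne_zero.2 hI)).ne'
  obtain ⟨J, hJ, fgJ, hJle, hJ1⟩ := hs _ hII 1 (by rw [hinv]; exact one_mem_one D⁰)
  have hJle' : (J : Submodule D K) ≤
      IsLocalization.coeSubmodule K I * ((I : FractionalIdeal D⁰ K)⁻¹ : FractionalIdeal D⁰ K) := by
    rwa [← coe_coeIdeal, ← coe_mul, coe_le_coe]
  obtain ⟨P, hPI, fgP, hJP⟩ := exists_fg_le_mul_of_fg_le_mul fgJ hJle'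
  obtain ⟨A, rfl⟩ : ∃ A : Ideal D, IsLocalization.coeSubmodule K A = P :=
    ⟨P.comap (Algebra.linearMap D K),
      Submodule.map_comap_eq_of_le (hPI.trans LinearMap.map_le_range)⟩
  have hJA : J ≤ (A : FractionalIdeal D⁰ K) * (I : FractionalIdeal D⁰ K)⁻¹ := by
    rwa [← coe_le_coe, coe_mul, coe_coeIdeal]
  have hA0 : (A : FractionalIdeal D⁰ K) * (I : FractionalIdeal D⁰ K)⁻¹ ≠ 0 :=
    ne_bot_of_le_ne_bot hJ hJA
  exact ⟨A, IsFractionRing.coeSubmodule_le_coeSubmodule.1 hPI,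
    coeIdeal_ne_zero.1 (left_ne_zero_of_mul hA0),
    (IsLocalization.coeSubmodule_fg K (IsFractionRing.injective D K) A).1 fgP,
    one_le.2 (s.star_mono _ _ hJ hA0 hJA hJ1)⟩

theorem StarInvertible.isFiniteTypeStarIdeal {I : Ideal D} (hinv : s.StarInvertible I)
    (hs : s.FiniteCharacter) (hI : s.IsStarIdeal I) : s.IsFiniteTypeStarIdeal I := by
  obtain ⟨A, hAI, hA, fg, h1⟩ := hinv.exists_fg_le hs hI.1
  have hA' : (A : FractionalIdeal D⁰ K) ≠ 0 := coeIdeal_ne_zero.2 hA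
  have hI' : (I : FractionalIdeal D⁰ K) ≠ 0 := coeIdeal_ne_zero.2 hI.1
  have hI0 : (I : FractionalIdeal D⁰ K)⁻¹ ≠ 0 := right_ne_zero_of_mul (bot_lt_mul_inv hI').ne'
  have hcancel : (I : FractionalIdeal D⁰ K) * (A * (I : FractionalIdeal D⁰ K)⁻¹) ≤ A :=
    calc
      (I : FractionalIdeal D⁰ K) * (A * (I : FractionalIdeal D⁰ K)⁻¹)
        = A * (I * (I : FractionalIdeal D⁰ K)⁻¹) := mul_left_comm _ _ _
      _ ≤ A := mul_le_of_le_one_right' mul_one_div_le_one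
  refine ⟨A, hA, fg, le_antisymm ?_ ?_⟩
  · calc
      s.star A ≤ s.star I := s.star_mono _ _ hA' hI' ((coeIdeal_le_coeIdeal K).2 hAI)
      _ = I := hI.2
  · calc
      (I : FractionalIdeal D⁰ K) ≤ I * s.star (A * (I : FractionalIdeal D⁰ K)⁻¹) :=
        le_mul_of_one_le_right' h1
      _ ≤ s.star (I * (A * (I : FractionalIdeal D⁰ K)⁻¹)) :=
        s.mul_star_le _ (mul_ne_zero hA' hI0)
      _ ≤ s.star A := s.star_mono _ _ (mul_ne_zero hI' (mul_ne_zero hA' hI0)) hA' hcancel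

theorem coe_ne_bot_iff {x : s.closure.FiniteTypeIdeal} : (x : Ideal D) ≠ ⊥ ↔ x ≠ 0 := by
  rw [ne_eq, ne_eq, FiniteTypeIdeal.ext_iff, FiniteTypeIdeal.coe_zero, closure_bot]

theorem isStarIdeal_coe {x : s.closure.FiniteTypeIdeal} (hx : x ≠ 0) :
    s.IsStarIdeal (x : Ideal D) :=
  ⟨coe_ne_bot_iff.2 hx, (s.star_coe_eq_coe_iff (coe_ne_bot_iff.2 hx)).2 x.closure_coe⟩

theorem isFiniteTypeStarIdeal_coe {x : s.closure.FiniteTypeIdeal} (hx : x ≠ 0) :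
    s.IsFiniteTypeStarIdeal (x : Ideal D) :=
  s.isFiniteTypeStarIdeal_iff.2 ⟨coe_ne_bot_iff.2 hx, x.isFiniteType⟩

theorem starComaximal_coe_iff {x y : s.closure.FiniteTypeIdeal} (hx : x ≠ 0) :
    s.StarComaximal x y ↔ IsCoprime x y := by
  have hxy : (x : Ideal D) ⊔ y ≠ ⊥ := ne_bot_of_le_ne_bot (coe_ne_bot_iff.2 hx) le_sup_left
  exact (s.star_coe_eq_one_iff hxy).trans FiniteTypeIdeal.isCoprime_iff.symm

theorem isHomog_coe_iff {x : s.closure.FiniteTypeIdeal} :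
    s.IsHomog x ↔ x ≠ 0 ∧ IsHomogeneous x := by
  constructor
  · rintro ⟨hx1, hx, -, hcop⟩
    have hx0 : x ≠ 0 := coe_ne_bot_iff.1 hx.1
    refine ⟨hx0, FiniteTypeIdeal.coe_ne_top_iff.1 hx1, fun y z hxy hxz hyz => ?_⟩
    have hy : y ≠ 0 := ne_bot_of_le_ne_bot hx0 hxy
    have hz : z ≠ 0 := ne_bot_of_le_ne_bot hx0 hxz
    by_contra! hne
    exact hcop y z (FiniteTypeIdeal.coe_ne_top_iff.2 hne.1) (FiniteTypeIdeal.coe_ne_top_iff.2 hne.2)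
      (isStarIdeal_coe hy) (isStarIdeal_coe hz) (isFiniteTypeStarIdeal_coe hy)
      (isFiniteTypeStarIdeal_coe hz) hxy hxz ((starComaximal_coe_iff hy).2 hyz)
  · rintro ⟨hx0, hx1, hcop⟩
    refine ⟨FiniteTypeIdeal.coe_ne_top_iff.2 hx1, isStarIdeal_coe hx0,
      isFiniteTypeStarIdeal_coe hx0, ?_⟩
    intro J J' hJ hJ' _ _ hJft hJft' hxJ hxJ' h
    obtain ⟨hJ0, hJft⟩ := s.isFiniteTypeStarIdeal_iff.1 hJft
    lift J to s.closure.FiniteTypeIdeal using hJft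
    lift J' to s.closure.FiniteTypeIdeal using (s.isFiniteTypeStarIdeal_iff.1 hJft').2
    rcases hcop J J' hxJ hxJ' ((starComaximal_coe_iff (coe_ne_bot_iff.1 hJ0)).1 h) with h | h
    exacts [FiniteTypeIdeal.coe_ne_top_iff.1 hJ h, FiniteTypeIdeal.coe_ne_top_iff.1 hJ' h]

theorem IsHomog.isFiniteType {J : Ideal D} (hJ : s.IsHomog J) : s.closure.IsFiniteType J :=
  (s.isFiniteTypeStarIdeal_iff.1 hJ.2.2.1).2

instance : Std.Symm s.StarComaximal :=
  ⟨fun A B h => by rwa [StarComaximal, add_comm]⟩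

theorem pairwise_starComaximal_map_coe_iff {T : Multiset s.closure.FiniteTypeIdeal}
    (hT : ∀ x ∈ T, x ≠ 0) :
    (T.map (↑) : Multiset (Ideal D)).Pairwise s.StarComaximal ↔ T.Pairwise IsCoprime := by
  induction T using Multiset.induction with
  | empty => simp
  | cons x T ih =>
    obtain ⟨hx, hT⟩ := Multiset.forall_mem_cons.1 hT
    simp only [Multiset.map_cons, multiset_pairwise_cons, Multiset.forall_mem_map_iff, ih hT,
      starComaximal_coe_iff hx]

theorem star_prod_map_coe_eq_iff {T : Multiset s.closure.FiniteTypeIdeal} {I : Ideal D}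
    (hT : ∀ x ∈ T, x ≠ 0) :
    s.star (((T.map (↑)).prod : Ideal D) : FractionalIdeal D⁰ K) = (I : FractionalIdeal D⁰ K) ↔
      (T.prod : Ideal D) = I := by
  have hprod : ((T.map (↑)).prod : Ideal D) ≠ ⊥ := by
    refine Multiset.prod_ne_zero fun h => ?_
    obtain ⟨x, hx, hx0⟩ := Multiset.mem_map.1 h
    exact coe_ne_bot_iff.2 (hT x hx) hx0
  rw [s.star_coe_eq_coe_iff hprod, FiniteTypeIdeal.coe_prod]

theorem isHomogeneousFactorization_iff {T : Multiset s.closure.FiniteTypeIdeal}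
    {x : s.closure.FiniteTypeIdeal} (hx : x ≠ 0) :
    IsHomogeneousFactorization T x ↔ (∀ J ∈ (T.map (↑) : Multiset (Ideal D)), s.IsHomog J) ∧
      (T.map (↑) : Multiset (Ideal D)).Pairwise s.StarComaximal ∧
      s.star (((T.map (↑)).prod : Ideal D) : FractionalIdeal D⁰ K) =
        ((x : Ideal D) : FractionalIdeal D⁰ K) := by
  simp only [Multiset.forall_mem_map_iff, isHomog_coe_iff]
  constructor
  · rintro ⟨hom, pw, rfl⟩
    have hT : ∀ y ∈ T, y ≠ 0 := by
      rintro _ hy rfl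
      exact hx (Multiset.prod_eq_zero hy)
    exact ⟨fun y hy => ⟨hT y hy, hom y hy⟩, (pairwise_starComaximal_map_coe_iff hT).2 pw,
      (star_prod_map_coe_eq_iff hT).2 rfl⟩
  · rintro ⟨hom, pw, hprod⟩
    have hT : ∀ y ∈ T, y ≠ 0 := fun y hy => (hom y hy).1
    exact ⟨fun y hy => (hom y hy).2, (pairwise_starComaximal_map_coe_iff hT).1 pw,
      FiniteTypeIdeal.ext ((star_prod_map_coe_eq_iff hT).1 hprod)⟩

theorem IsSHDomain.exists_prod_le (hSH : s.IsSHDomain) {x : s.closure.FiniteTypeIdeal}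
    (hx : x ≠ 0) :
    ∃ T : Multiset s.closure.FiniteTypeIdeal, (∀ y ∈ T, IsHomogeneous y) ∧ T.prod ≤ x := by
  obtain ⟨d, hdx, hd⟩ := Submodule.exists_mem_ne_zero_of_ne_bot (coe_ne_bot_iff.2 hx)
  by_cases hu : IsUnit d
  · have hx1 : x = 1 := FiniteTypeIdeal.ext (Ideal.eq_top_of_isUnit_mem _ hdx hu)
    exact ⟨0, by simp, hx1.ge⟩
  obtain ⟨T, hT, hTd⟩ := hSH d hd hu
  lift T to Multiset s.closure.FiniteTypeIdeal using fun J hJ => (hT J hJ).isFiniteType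
  simp only [Multiset.forall_mem_map_iff, isHomog_coe_iff] at hT
  refine ⟨T, fun y hy => (hT y hy).2, FiniteTypeIdeal.le_iff_coe_le.2 ?_⟩
  rwa [(star_prod_map_coe_eq_iff fun y hy => (hT y hy).1).1 hTd, Ideal.span_singleton_le_iff_mem]

end StarOperation

theorem starInvertible_factorization_general {D K : Type*} [CommRing D] [IsDomain D] [Field K]
    [Algebra D K] [IsFractionRing D K] (s : StarOperation D K) (hSH : s.IsSHDomain) (I : Ideal D)
    (hI : s.IsFiniteTypeStarIdeal I) :
    ∃ T : Multiset (Ideal D), (∀ J ∈ T, s.IsHomog J) ∧ T.Pairwise s.StarComaximal ∧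
      s.star ((T.prod : Ideal D) : FractionalIdeal D⁰ K) = (I : FractionalIdeal D⁰ K) ∧
      ∀ U : Multiset (Ideal D), (∀ J ∈ U, s.IsHomog J) → U.Pairwise s.StarComaximal →
        s.star ((U.prod : Ideal D) : FractionalIdeal D⁰ K) = (I : FractionalIdeal D⁰ K) →
        U = T := by
  obtain ⟨hI0, hI⟩ := s.isFiniteTypeStarIdeal_iff.1 hI
  lift I to s.closure.FiniteTypeIdeal using hI
  replace hI0 := StarOperation.coe_ne_bot_iff.1 hI0
  obtain ⟨V, hV, hVI⟩ := hSH.exists_prod_le hI0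
  obtain ⟨T, hT, unique⟩ :=
    IsIntegralOrder.IsHomogeneousFactorization.existsUnique_of_prod_le hV hVI
  obtain ⟨hom, pw, hprod⟩ := (StarOperation.isHomogeneousFactorization_iff hI0).1 hT
  refine ⟨_, hom, pw, hprod, fun U homU pwU hprodU => ?_⟩
  lift U to Multiset s.closure.FiniteTypeIdeal using fun J hJ => (homU J hJ).isFiniteType
  exact congrArg (Multiset.map _)
    (unique U ((StarOperation.isHomogeneousFactorization_iff hI0).2 ⟨homU, pwU, hprodU⟩))

/-- Let `D` be a `*`-SH domain and `I` a `*`-invertible integral `*`-ideal.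
Then `I` is expressible, uniquely up to order, as a `*`-product of mutually `*`-comaximal
`*`-homogeneous ideals. -/
theorem starInvertible_factorization {D K : Type*} [CommRing D] [IsDomain D] [Field K]
    [Algebra D K] [IsFractionRing D K] (s : StarOperation D K) (hs : s.FiniteCharacter)
    (hSH : s.IsSHDomain) (I : Ideal D) (hstar : s.IsStarIdeal I)
    (hinv : s.StarInvertible I) :
    ∃ T : Multiset (Ideal D), (∀ J ∈ T, s.IsHomog J) ∧ T.Pairwise s.StarComaximal ∧
      s.star ((T.prod : Ideal D) : FractionalIdeal D⁰ K) = (I : FractionalIdeal D⁰ K) ∧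
      ∀ U : Multiset (Ideal D), (∀ J ∈ U, s.IsHomog J) → U.Pairwise s.StarComaximal →
        s.star ((U.prod : Ideal D) : FractionalIdeal D⁰ K) = (I : FractionalIdeal D⁰ K) →
        U = T :=
  starInvertible_factorization_general s hSH I (hinv.isFiniteTypeStarIdeal hs hstar)
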